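/- There are exactly 102 templates Γ with cogenus δ(Γ) = 4. -/

import Mathlib

/-! Every edge `e` of a template has positive cogenus `(j - i) * w - 1`, which is at least `j - i - 1`,
the number of vertices that `e` covers. Since the vertices `1, …, l - 1` are all covered, cogenus `4`
forces `l ≤ 5` (`Template.l_le`), and each weight is at most `5` as well. So all edges come from the
finite list `edgeList`. Moreover `l` is the largest endpoint of an edge (`Template.sup_eq`), so that
a template is determined by its multiset of edges.

The templates of cogenus `4` are thus in bijection with the multisets of edges from `edgeList` that
have total cogenus `4` and satisfy the covering condition. The function `multisetsOfSum` lists the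
multisets of given total, each exactly once (`mem_multisetsOfSum`, `nodup_multisetsOfSum`), and the
ones which satisfy the covering condition are counted by evaluation in the kernel.
-/


/-- A *template* `Γ = (l, E)`: `l ≥ 1` is the length and `E` is a nonempty finite multiset of
weighted edges `e = (i(e), j(e), w(e))` with `0 ≤ i(e) < j(e) ≤ l`, `w(e) ≥ 1`, such that every
short edge (`j(e) = i(e) + 1`) has weight `≥ 2`, and every vertex `1 ≤ v ≤ l - 1` is covered by
some edge (`i(e) < v < j(e)`). -/
structure Template where
  /-- the length `l(Γ)` -/
  l : ℕ
  /-- the multiset of edges `(i(e), j(e), w(e))` -/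
  E : Multiset (ℕ × ℕ × ℕ)
  hl : 1 ≤ l
  hE : E ≠ 0
  h_edge : ∀ e ∈ E, e.1 < e.2.1 ∧ e.2.1 ≤ l ∧ 1 ≤ e.2.2
  h_short : ∀ e ∈ E, e.2.1 = e.1 + 1 → 2 ≤ e.2.2
  h_cover : ∀ v : ℕ, 1 ≤ v → v ≤ l - 1 → ∃ e ∈ E, e.1 < v ∧ v < e.2.1

namespace Template

/-- The cogenus `δ(Γ) = ∑_{e ∈ E} ((j(e) - i(e))·w(e) - 1)`. -/
def delta (Γ : Template) : ℕ :=
  (Γ.E.map (fun e => (e.2.1 - e.1) * e.2.2 - 1)).sum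

/-- `κ_v(Γ)`: the sum of the weights of the edges `e` with `i(e) < v ≤ j(e)`. -/
def kappa (Γ : Template) (v : ℕ) : ℕ :=
  ((Γ.E.filter (fun e => e.1 < v ∧ v ≤ e.2.1)).map (fun e => e.2.2)).sum

/-- `k_min(Γ) = max_{1 ≤ v ≤ l} (κ_v(Γ) - v + 1)`. -/
def kmin (Γ : Template) : ℤ :=
  (Finset.Icc 1 Γ.l).sup' (Finset.nonempty_Icc.mpr Γ.hl)
    (fun v => (Γ.kappa v : ℤ) - v + 1)

/-- `ε(Γ) = 1` if every edge arriving at `l` has weight `1`, and `ε(Γ) = 0` otherwise. -/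
def eps (Γ : Template) : ℕ :=
  if ∀ e ∈ Γ.E, e.2.1 = Γ.l → e.2.2 = 1 then 1 else 0

/-- `j₀(Γ)`: the smallest `v ∈ {1, …, l}` with `κ_v(Γ) = k_min(Γ) + v - 1`. -/
noncomputable def j0 (Γ : Template) : ℕ :=
  sInf {v : ℕ | 1 ≤ v ∧ v ≤ Γ.l ∧ (Γ.kappa v : ℤ) = Γ.kmin + v - 1}

/-- `s(Γ)`: the number of edges (with multiplicity) from `j₀(Γ) - 1` to `j₀(Γ)`. -/
noncomputable def s (Γ : Template) : ℕ :=
  (Γ.E.filter (fun e => e.1 = Γ.j0 - 1 ∧ e.2.1 = Γ.j0)).card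

end Template

/-- The multisets with elements in the list `L` whose `d`-values add up to `n`. The multiplicity `k`
of the head runs only up to `n`, which loses nothing when `d` is positive on `L`. -/
def multisetsOfSum {α : Type*} (d : α → ℕ) : List α → ℕ → List (Multiset α)
  | [], n => if n = 0 then [0] else []
  | a :: L, n => (List.range (n + 1)).flatMap fun k =>
      if k * d a ≤ n then
        (multisetsOfSum d L (n - k * d a)).map (Multiset.replicate k a + ·)
      else []

theorem mem_multisetsOfSum {α : Type*} (d : α → ℕ) (L : List α)
    (hd : ∀ a ∈ L, 1 ≤ d a) (n : ℕ) (m : Multiset α) :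
    m ∈ multisetsOfSum d L n ↔ (∀ a ∈ m, a ∈ L) ∧ (m.map d).sum = n := by
  classical
  induction L generalizing n m with
  | nil =>
    rw [multisetsOfSum]
    constructor
    · intro h
      split_ifs at h with h0
      · simp_all
      · simp at h
    · rintro ⟨h1, h2⟩
      have : m = 0 := Multiset.eq_zero_of_forall_notMem fun a ha => by simpa using h1 a ha
      subst this
      simp at h2
      simp [← h2]
  | cons a L ih =>
    have ih := ih (fun b hb => hd b (List.mem_cons_of_mem _ hb))
    have ha := hd a List.mem_cons_self
    simp only [multisetsOfSum, List.mem_flatMap, List.mem_range]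
    constructor
    · rintro ⟨k, hk, h⟩
      split_ifs at h with hle
      · obtain ⟨m', hm', rfl⟩ := List.mem_map.1 h
        obtain ⟨h1, h2⟩ := (ih _ _).1 hm'
        refine ⟨fun b hb => ?_, ?_⟩
        · rcases Multiset.mem_add.1 hb with hb | hb
          · exact Multiset.eq_of_mem_replicate hb ▸ List.mem_cons_self
          · exact List.mem_cons_of_mem _ (h1 b hb)
        · simp only [Multiset.map_add, Multiset.map_replicate, Multiset.sum_add,
            Multiset.sum_replicate, smul_eq_mul, h2]
          omega
      · simp at h
    · rintro ⟨h1, h2⟩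
      have hm : Multiset.replicate (m.count a) a + m.filter (fun b => ¬ b = a) = m := by
        rw [← Multiset.filter_eq']
        exact Multiset.filter_add_not _ m
      have hs : m.count a * d a + ((m.filter (fun b => ¬ b = a)).map d).sum = n := by
        rw [← h2]
        conv_rhs => rw [← hm]
        simp
      have hk : m.count a ≤ m.count a * d a := Nat.le_mul_of_pos_right _ ha
      refine ⟨m.count a, by omega, ?_⟩
      rw [if_pos (by omega)]
      refine List.mem_map.2 ⟨m.filter (fun b => ¬ b = a), (ih _ _).2 ⟨fun b hb => ?_, by omega⟩, hm⟩
      obtain ⟨hb, hne⟩ := Multiset.mem_filter.1 hb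
      exact (List.mem_cons.1 (h1 b hb)).resolve_left hne

theorem nodup_multisetsOfSum {α : Type*} (d : α → ℕ) (L : List α)
    (hd : ∀ a ∈ L, 1 ≤ d a) (hL : L.Nodup) (n : ℕ) : (multisetsOfSum d L n).Nodup := by
  classical
  induction L generalizing n with
  | nil => rw [multisetsOfSum]; split_ifs <;> simp
  | cons a L ih =>
    obtain ⟨haL, hL⟩ := List.nodup_cons.1 hL
    have hd' : ∀ b ∈ L, 1 ≤ d b := fun b hb => hd b (List.mem_cons_of_mem _ hb)
    -- The multiplicity of `a` tells the blocks of the concatenation apart.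
    have key : ∀ k m, m ∈ (if k * d a ≤ n then
        (multisetsOfSum d L (n - k * d a)).map (Multiset.replicate k a + ·) else []) →
        m.count a = k := by
      intro k m h
      split_ifs at h
      · obtain ⟨m', hm', rfl⟩ := List.mem_map.1 h
        have h1 := ((mem_multisetsOfSum d L hd' _ _).1 hm').1
        have : m'.count a = 0 := Multiset.count_eq_zero.2 fun h => haL (h1 a h)
        simp [this]
      · simp at h
    rw [multisetsOfSum, List.nodup_flatMap]
    refine ⟨fun k _ => ?_, ?_⟩
    · split_ifs
      · exact (ih hd' hL _).map (add_right_injective _)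
      · exact List.nodup_nil
    · refine List.nodup_range.imp ?_
      intro k k' hne m hm hm'
      exact hne ((key k m hm).symm.trans (key k' m hm'))

/-- The cogenus `(j - i) * w - 1` of a single edge. -/
def edgeCogenus (e : ℕ × ℕ × ℕ) : ℕ := (e.2.1 - e.1) * e.2.2 - 1

/-- The edges `(i, j, w)` with `i < j ≤ 5`, of weight between `1` and `5` (at least `2` if
`j = i + 1`) and of cogenus at most `4`. -/
def edgeList : List (ℕ × ℕ × ℕ) :=
  (List.range 6 ×ˢ (List.range 6 ×ˢ List.range 6)).filter fun e =>
    e.1 < e.2.1 ∧ 1 ≤ e.2.2 ∧ (e.2.1 = e.1 + 1 → 2 ≤ e.2.2) ∧ edgeCogenus e ≤ 4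

theorem mem_edgeList (e : ℕ × ℕ × ℕ) : e ∈ edgeList ↔
    (e.1 < 6 ∧ e.2.1 < 6 ∧ e.2.2 < 6) ∧
    e.1 < e.2.1 ∧ 1 ≤ e.2.2 ∧ (e.2.1 = e.1 + 1 → 2 ≤ e.2.2) ∧ edgeCogenus e ≤ 4 := by
  obtain ⟨i, j, w⟩ := e
  simp [edgeList, imp_iff_not_or]

theorem nodup_edgeList : edgeList.Nodup :=
  (List.nodup_range.product (List.nodup_range.product List.nodup_range)).filter _

theorem one_le_edgeCogenus {e : ℕ × ℕ × ℕ} (h1 : e.1 < e.2.1) (h2 : 1 ≤ e.2.2)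
    (h3 : e.2.1 = e.1 + 1 → 2 ≤ e.2.2) : 1 ≤ edgeCogenus e := by
  unfold edgeCogenus
  by_cases h : e.2.1 = e.1 + 1
  · have := h3 h
    rw [h, Nat.add_sub_cancel_left]
    omega
  · have : (e.2.1 - e.1) * 1 ≤ (e.2.1 - e.1) * e.2.2 := Nat.mul_le_mul_left _ h2
    omega

/-- A set of vertices covered by the edges of `E` has at most as many elements as the total
cogenus of `E`. -/
theorem card_le_sum_edgeCogenus (E : Multiset (ℕ × ℕ × ℕ)) (hE : ∀ e ∈ E, 1 ≤ e.2.2)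
    (S : Finset ℕ) (hS : ∀ v ∈ S, ∃ e ∈ E, e.1 < v ∧ v < e.2.1) :
    S.card ≤ (E.map edgeCogenus).sum := by
  induction E using Multiset.induction_on generalizing S with
  | empty =>
    have : S = ∅ := Finset.eq_empty_of_forall_notMem fun v hv => by simpa using hS v hv
    simp [this]
  | cons a E ih =>
    have h := ih (fun e he => hE e (Multiset.mem_cons_of_mem he)) (S \ Finset.Ioo a.1 a.2.1) (by
      intro v hv
      simp only [Finset.mem_sdiff, Finset.mem_Ioo] at hv
      obtain ⟨e, he, hev⟩ := hS v hv.1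
      rcases Multiset.mem_cons.1 he with rfl | he
      · exact absurd hev hv.2
      · exact ⟨e, he, hev⟩)
    have h2 := Finset.card_le_card_sdiff_add_card (s := S) (t := Finset.Ioo a.1 a.2.1)
    have h3 : (a.2.1 - a.1) * 1 ≤ (a.2.1 - a.1) * a.2.2 :=
      Nat.mul_le_mul_left _ (hE a (Multiset.mem_cons_self a E))
    rw [Nat.card_Ioo] at h2
    rw [Multiset.map_cons, Multiset.sum_cons]
    unfold edgeCogenus at h ⊢
    omega

namespace Template

theorem l_le (Γ : Template) : Γ.l ≤ Γ.delta + 1 := by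
  have h := card_le_sum_edgeCogenus Γ.E (fun e he => (Γ.h_edge e he).2.2)
    (Finset.Icc 1 (Γ.l - 1)) (fun v hv => by
      rw [Finset.mem_Icc] at hv
      exact Γ.h_cover v hv.1 hv.2)
  rw [Nat.card_Icc] at h
  change _ ≤ Γ.delta at h
  omega

/-- If no edge ended at `l`, then `l ≥ 2` and the vertex `l - 1` would not be covered. -/
theorem sup_eq (Γ : Template) : (Γ.E.map (fun e => e.2.1)).sup = Γ.l := by
  have hle : ∀ e ∈ Γ.E, e.2.1 ≤ (Γ.E.map (fun e => e.2.1)).sup := fun e he =>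
    Multiset.le_sup (Multiset.mem_map_of_mem _ he)
  apply le_antisymm
  · rw [Multiset.sup_le]
    intro b hb
    obtain ⟨e, he, rfl⟩ := Multiset.mem_map.1 hb
    exact (Γ.h_edge e he).2.1
  · by_contra! h
    obtain ⟨e, he⟩ := Multiset.exists_mem_of_ne_zero Γ.hE
    have h1 := hle e he
    have h2 := (Γ.h_edge e he).1
    obtain ⟨f, hf, h3, h4⟩ := Γ.h_cover (Γ.l - 1) (by omega) le_rfl
    have := hle f hf
    omega

theorem E_injective : Function.Injective Template.E := by
  intro Γ Γ' h
  have hl : Γ.l = Γ'.l := by rw [← Γ.sup_eq, ← Γ'.sup_eq, h]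
  cases Γ; cases Γ'
  cases h; cases hl
  rfl

end Template

/-- Every vertex strictly between `0` and the largest endpoint of an edge of `E` is covered by an
edge of `E`. -/
def IsCovered (E : Multiset (ℕ × ℕ × ℕ)) : Prop :=
  ∀ v ∈ List.range (E.map (fun e => e.2.1)).sup, 1 ≤ v → ∃ e ∈ E, e.1 < v ∧ v < e.2.1

instance : DecidablePred IsCovered := fun E =>
  haveI (v : ℕ) : Decidable (∃ e ∈ E, e.1 < v ∧ v < e.2.1) := Multiset.decidableExistsMultiset
  inferInstanceAs (Decidable (∀ v ∈ List.range (E.map (fun e => e.2.1)).sup,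
    1 ≤ v → ∃ e ∈ E, e.1 < v ∧ v < e.2.1))

/-- The edge multisets of the templates of cogenus `4`. -/
theorem exists_template_iff (E : Multiset (ℕ × ℕ × ℕ)) :
    (∃ Γ : Template, Γ.delta = 4 ∧ Γ.E = E) ↔
      ((∀ e ∈ E, e ∈ edgeList) ∧ (E.map edgeCogenus).sum = 4) ∧ IsCovered E := by
  constructor
  · rintro ⟨Γ, h, rfl⟩
    have hsum : (Γ.E.map edgeCogenus).sum = 4 := h
    refine ⟨⟨fun e he => ?_, hsum⟩, fun v hv h1 => ?_⟩
    · obtain ⟨h1, h2, h3⟩ := Γ.h_edge e he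
      have hl := Γ.l_le
      have hd : edgeCogenus e ≤ 4 :=
        hsum ▸ Multiset.single_le_sum (fun _ _ => Nat.zero_le _) _ (Multiset.mem_map_of_mem _ he)
      have hw : 1 * e.2.2 ≤ (e.2.1 - e.1) * e.2.2 := Nat.mul_le_mul_right _ (by omega)
      refine (mem_edgeList e).2 ⟨⟨by omega, by omega, ?_⟩, h1, h3, Γ.h_short e he, hd⟩
      unfold edgeCogenus at hd
      omega
    · rw [Γ.sup_eq, List.mem_range] at hv
      exact Γ.h_cover v h1 (by omega)
  · rintro ⟨⟨hmem, hsum⟩, hcov⟩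
    have hE : E ≠ 0 := by
      rintro rfl
      simp at hsum
    have hle : ∀ e ∈ E, e.2.1 ≤ (E.map (fun e => e.2.1)).sup := fun e he =>
      Multiset.le_sup (Multiset.mem_map_of_mem _ he)
    have hl : 1 ≤ (E.map (fun e => e.2.1)).sup := by
      obtain ⟨e, he⟩ := Multiset.exists_mem_of_ne_zero hE
      have h1 := hle e he
      have h2 := ((mem_edgeList e).1 (hmem e he)).2.1
      omega
    refine ⟨⟨(E.map (fun e => e.2.1)).sup, E, hl, hE, fun e he => ?_, fun e he => ?_,
      fun v h1 h2 => ?_⟩, hsum, rfl⟩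
    · have h := ((mem_edgeList e).1 (hmem e he)).2
      exact ⟨h.1, hle e he, h.2.1⟩
    · exact ((mem_edgeList e).1 (hmem e he)).2.2.2.1
    · exact hcov v (List.mem_range.2 (by omega)) h1

theorem length_filter_isCovered :
    ((multisetsOfSum edgeCogenus edgeList 4).filter (fun E => decide (IsCovered E))).length = 102 := by
  decide +kernel

/-- There are exactly 102 templates with cogenus 4. -/
theorem templates_of_cogenus_four :
    {Γ : Template | Γ.delta = 4}.ncard = 102 := by
  classical
  have hd : ∀ e ∈ edgeList, 1 ≤ edgeCogenus e := fun e he => by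
    have h := ((mem_edgeList e).1 he).2
    exact one_le_edgeCogenus h.1 h.2.1 h.2.2.1
  rw [← Set.ncard_image_of_injective _ Template.E_injective]
  have himage : Template.E '' {Γ : Template | Γ.delta = 4} =
      (((multisetsOfSum edgeCogenus edgeList 4).filter
        (fun E => decide (IsCovered E))).toFinset : Set (Multiset (ℕ × ℕ × ℕ))) := by
    ext E
    rw [Finset.mem_coe, List.mem_toFinset, List.mem_filter, decide_eq_true_iff,
      mem_multisetsOfSum _ _ hd, ← exists_template_iff]
    rfl
  rw [himage, Set.ncard_coe_finset, List.toFinset_card_of_nodup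
    ((nodup_multisetsOfSum _ _ hd nodup_edgeList 4).filter _), length_filter_isCovered]
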